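/- Let M be an I-unitary operator on K, let U be a unitary operator on H, and write [[A,B],[C,D]] for the block entries of the J-unitary operator C M C*. Let Ψ_U : H → K, Ψ_U h = ((1/2)(U + 1)h, (i/2)(U − 1)h), and let (a', b') be the block components of M Ψ_U : H → K (i.e. M Ψ_U h = (a'h, b'h)). Then a' + i b' is invertible and (a' − i b')(a' + i b')⁻¹ = (AU + B)(CU + D)⁻¹; that is, the stereographic projection intertwines the action of M on I-Lagrangian frames with the Möbius action of C M C* on unitaries. -/

import Mathlib

open ContinuousLinearMap

noncomputable section

variable {H : Type*} [NormedAddCommGroup H] [InnerProductSpace ℂ H] [CompleteSpace H]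

/-- The Hilbert space `K = H ⊕ H` (with the `ℓ²` product norm). -/
abbrev Kspace (H : Type*) [NormedAddCommGroup H] [InnerProductSpace ℂ H] : Type _ :=
  WithLp 2 (H × H)

/-- The block operator `[[A,B],[C,D]]` on `K`, acting by `(x,y) ↦ (Ax + By, Cx + Dy)`. -/
def blockOp (A B C D : H →L[ℂ] H) : Kspace H →L[ℂ] Kspace H :=
  (((WithLp.prodContinuousLinearEquiv 2 ℂ H H).symm : (H × H) →L[ℂ] Kspace H)) ∘L
    (((A ∘L ContinuousLinearMap.fst ℂ H H) + (B ∘L ContinuousLinearMap.snd ℂ H H)).prod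
      ((C ∘L ContinuousLinearMap.fst ℂ H H) + (D ∘L ContinuousLinearMap.snd ℂ H H))) ∘L
    (((WithLp.prodContinuousLinearEquiv 2 ℂ H H) : Kspace H →L[ℂ] H × H))

/-- Upper-left block of an operator on `K`. -/
def blkA (M : Kspace H →L[ℂ] Kspace H) : H →L[ℂ] H :=
  ContinuousLinearMap.fst ℂ H H ∘L
    ((WithLp.prodContinuousLinearEquiv 2 ℂ H H) : Kspace H →L[ℂ] H × H) ∘L M ∘L
    ((WithLp.prodContinuousLinearEquiv 2 ℂ H H).symm : (H × H) →L[ℂ] Kspace H) ∘L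
    ContinuousLinearMap.inl ℂ H H

/-- Upper-right block of an operator on `K`. -/
def blkB (M : Kspace H →L[ℂ] Kspace H) : H →L[ℂ] H :=
  ContinuousLinearMap.fst ℂ H H ∘L
    ((WithLp.prodContinuousLinearEquiv 2 ℂ H H) : Kspace H →L[ℂ] H × H) ∘L M ∘L
    ((WithLp.prodContinuousLinearEquiv 2 ℂ H H).symm : (H × H) →L[ℂ] Kspace H) ∘L
    ContinuousLinearMap.inr ℂ H H

/-- Lower-left block of an operator on `K`. -/
def blkC (M : Kspace H →L[ℂ] Kspace H) : H →L[ℂ] H :=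
  ContinuousLinearMap.snd ℂ H H ∘L
    ((WithLp.prodContinuousLinearEquiv 2 ℂ H H) : Kspace H →L[ℂ] H × H) ∘L M ∘L
    ((WithLp.prodContinuousLinearEquiv 2 ℂ H H).symm : (H × H) →L[ℂ] Kspace H) ∘L
    ContinuousLinearMap.inl ℂ H H

/-- Lower-right block of an operator on `K`. -/
def blkD (M : Kspace H →L[ℂ] Kspace H) : H →L[ℂ] H :=
  ContinuousLinearMap.snd ℂ H H ∘L
    ((WithLp.prodContinuousLinearEquiv 2 ℂ H H) : Kspace H →L[ℂ] H × H) ∘L M ∘L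
    ((WithLp.prodContinuousLinearEquiv 2 ℂ H H).symm : (H × H) →L[ℂ] Kspace H) ∘L
    ContinuousLinearMap.inr ℂ H H

/-- The Cayley transform `C = (1/√2)[[1, -i],[1, i]]`. -/
def Cayley (H : Type*) [NormedAddCommGroup H] [InnerProductSpace ℂ H] [CompleteSpace H] :
    Kspace H →L[ℂ] Kspace H :=
  blockOp (((Real.sqrt 2 : ℂ)⁻¹) • 1) ((-((Real.sqrt 2 : ℂ)⁻¹ * Complex.I)) • 1)
    (((Real.sqrt 2 : ℂ)⁻¹) • 1) ((((Real.sqrt 2 : ℂ)⁻¹ * Complex.I)) • 1)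

/-- The transfer operator `M^E = [[(E − V)T⁻¹, −T*],[T⁻¹, 0]]`, where the inverse `T⁻¹`
is given as the operator `Tinv`. -/
def transferOp (E : ℝ) (V T Tinv : H →L[ℂ] H) : Kspace H →L[ℂ] Kspace H :=
  blockOp ((((E : ℂ) • (1 : H →L[ℂ] H)) - V) ∘L Tinv) (-(adjoint T)) Tinv 0

/-- The product of transfer operators `M_N^E ⋯ M_1^E` (empty product for `N = 0`). -/
def transferProd (V T Tinv : ℕ → H →L[ℂ] H) (E : ℝ) : ℕ → (Kspace H →L[ℂ] Kspace H)
  | 0 => 1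
  | n + 1 => transferOp E (V (n + 1)) (T (n + 1)) (Tinv (n + 1)) ∘L transferProd V T Tinv E n

/-- The skew-adjoint unitary `I = [[0,-1],[1,0]]`. -/
def Iop (H : Type*) [NormedAddCommGroup H] [InnerProductSpace ℂ H] [CompleteSpace H] :
    Kspace H →L[ℂ] Kspace H :=
  blockOp 0 (-1) 1 0

/-- The frame `Ψ_U : H → K`, `Ψ_U h = ((1/2)(U + 1)h, (i/2)(U − 1)h)`. -/
def frameOf (U : H →L[ℂ] H) : H →L[ℂ] Kspace H :=
  ((WithLp.prodContinuousLinearEquiv 2 ℂ H H).symm : (H × H) →L[ℂ] Kspace H) ∘L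
    (((2 : ℂ)⁻¹ • (U + 1)).prod ((Complex.I * (2 : ℂ)⁻¹) • (U - 1)))

/-- The first block component of a map `H → K`. -/
def cmp1 (Ψ : H →L[ℂ] Kspace H) : H →L[ℂ] H :=
  ContinuousLinearMap.fst ℂ H H ∘L
    ((WithLp.prodContinuousLinearEquiv 2 ℂ H H) : Kspace H →L[ℂ] H × H) ∘L Ψ

/-- The second block component of a map `H → K`. -/
def cmp2 (Ψ : H →L[ℂ] Kspace H) : H →L[ℂ] H :=
  ContinuousLinearMap.snd ℂ H H ∘L
    ((WithLp.prodContinuousLinearEquiv 2 ℂ H H) : Kspace H →L[ℂ] H × H) ∘L Ψ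

section Helpers

set_option linter.unusedSectionVars false

theorem blockOp_fst (A B C D : H →L[ℂ] H) (z : Kspace H) :
    (blockOp A B C D z).fst = A z.fst + B z.snd := rfl

theorem blockOp_snd (A B C D : H →L[ℂ] H) (z : Kspace H) :
    (blockOp A B C D z).snd = C z.fst + D z.snd := rfl

theorem frameOf_fst (U : H →L[ℂ] H) (h : H) :
    (frameOf U h).fst = (2 : ℂ)⁻¹ • (U h + h) := rfl

theorem frameOf_snd (U : H →L[ℂ] H) (h : H) :
    (frameOf U h).snd = (Complex.I * (2 : ℂ)⁻¹) • (U h - h) := rfl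

theorem cmp1_apply (Ψ : H →L[ℂ] Kspace H) (h : H) : cmp1 Ψ h = (Ψ h).fst := rfl

theorem cmp2_apply (Ψ : H →L[ℂ] Kspace H) (h : H) : cmp2 Ψ h = (Ψ h).snd := rfl

theorem K_ext (z w : Kspace H) (h1 : z.fst = w.fst) (h2 : z.snd = w.snd) : z = w := by
  apply (WithLp.ofLp_injective 2)
  exact Prod.ext h1 h2

theorem adjoint_Cayley : adjoint (Cayley H) =
    blockOp (((Real.sqrt 2 : ℂ)⁻¹) • 1) (((Real.sqrt 2 : ℂ)⁻¹) • 1)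
    (((Real.sqrt 2 : ℂ)⁻¹ * Complex.I) • 1) ((-((Real.sqrt 2 : ℂ)⁻¹ * Complex.I)) • 1) := by
  symm
  rw [ContinuousLinearMap.eq_adjoint_iff]
  intro x y
  simp only [WithLp.prod_inner_apply, Cayley]
  change inner ℂ (blockOp _ _ _ _ x).fst y.fst + inner ℂ (blockOp _ _ _ _ x).snd y.snd
    = inner ℂ x.fst (blockOp _ _ _ _ y).fst + inner ℂ x.snd (blockOp _ _ _ _ y).snd
  simp only [blockOp_fst, blockOp_snd, inner_add_left, inner_add_right, _root_.smul_apply,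
    one_apply_eq_self, inner_smul_left, inner_smul_right, map_neg, map_mul, map_inv₀,
    Complex.conj_ofReal, Complex.conj_I]
  ring

theorem Cayley_frame (U : H →L[ℂ] H) (h : H) :
    adjoint (Cayley H) (WithLp.toLp 2 (U h, h)) = (Real.sqrt 2 : ℂ) • frameOf U h := by
  have h2 : (Real.sqrt 2 : ℂ)⁻¹ = (Real.sqrt 2 : ℂ) * (2 : ℂ)⁻¹ := by
    have h3 : (Real.sqrt 2 : ℂ) * (Real.sqrt 2 : ℂ) = 2 := by
      rw [← Complex.ofReal_mul, Real.mul_self_sqrt (by norm_num)]; norm_num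
    have h4 : (Real.sqrt 2 : ℂ) ≠ 0 := by
      intro h0; rw [h0] at h3; norm_num at h3
    field_simp
    rw [pow_two]; exact h3.symm
  rw [adjoint_Cayley, h2]
  apply K_ext
  · rw [blockOp_fst]
    change _ = (Real.sqrt 2 : ℂ) • (frameOf U h).fst
    rw [frameOf_fst]
    simp only [_root_.smul_apply, one_apply_eq_self, WithLp.toLp_fst, WithLp.toLp_snd]
    module
  · rw [blockOp_snd]
    change _ = (Real.sqrt 2 : ℂ) • (frameOf U h).snd
    rw [frameOf_snd]
    simp only [_root_.smul_apply, one_apply_eq_self, WithLp.toLp_fst, WithLp.toLp_snd]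
    module

theorem blk_split (N : Kspace H →L[ℂ] Kspace H) (x y : H) :
    N (WithLp.toLp 2 (x, y)) = N (WithLp.toLp 2 (x, 0)) + N (WithLp.toLp 2 (0, y)) := by
  rw [← map_add]
  congr 1
  apply K_ext <;> simp

theorem sqrt_cancel (x : H) : (Real.sqrt 2 : ℂ)⁻¹ • (Real.sqrt 2 : ℂ) • x = x := by
  rw [smul_smul, inv_mul_cancel₀, one_smul]
  simp

theorem blk_upper (M : Kspace H →L[ℂ] Kspace H) (U : H →L[ℂ] H) :
    blkA (Cayley H ∘L M ∘L adjoint (Cayley H)) ∘L U +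
        blkB (Cayley H ∘L M ∘L adjoint (Cayley H)) =
      cmp1 (M ∘L frameOf U) - Complex.I • cmp2 (M ∘L frameOf U) := by
  ext h
  have e : (blkA (Cayley H ∘L M ∘L adjoint (Cayley H)) ∘L U +
        blkB (Cayley H ∘L M ∘L adjoint (Cayley H))) h =
      ((Cayley H ∘L M ∘L adjoint (Cayley H)) (WithLp.toLp 2 (U h, h))).fst := by
    rw [blk_split]; rfl
  rw [e, ContinuousLinearMap.comp_apply, ContinuousLinearMap.comp_apply, Cayley_frame, map_smul,
    Cayley, blockOp_fst]
  change _ = (M (frameOf U h)).fst - Complex.I • (M (frameOf U h)).snd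
  change ((Real.sqrt 2 : ℂ)⁻¹) • ((Real.sqrt 2 : ℂ) • (M (frameOf U h)).fst) +
    (-((Real.sqrt 2 : ℂ)⁻¹ * Complex.I)) • ((Real.sqrt 2 : ℂ) • (M (frameOf U h)).snd) = _
  rw [sqrt_cancel, mul_comm, neg_smul, mul_smul, sqrt_cancel, sub_eq_add_neg]

theorem blk_lower (M : Kspace H →L[ℂ] Kspace H) (U : H →L[ℂ] H) :
    blkC (Cayley H ∘L M ∘L adjoint (Cayley H)) ∘L U +
        blkD (Cayley H ∘L M ∘L adjoint (Cayley H)) =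
      cmp1 (M ∘L frameOf U) + Complex.I • cmp2 (M ∘L frameOf U) := by
  ext h
  have e : (blkC (Cayley H ∘L M ∘L adjoint (Cayley H)) ∘L U +
        blkD (Cayley H ∘L M ∘L adjoint (Cayley H))) h =
      ((Cayley H ∘L M ∘L adjoint (Cayley H)) (WithLp.toLp 2 (U h, h))).snd := by
    rw [blk_split]; rfl
  rw [e, ContinuousLinearMap.comp_apply, ContinuousLinearMap.comp_apply, Cayley_frame, map_smul,
    Cayley, blockOp_snd]
  change _ = (M (frameOf U h)).fst + Complex.I • (M (frameOf U h)).snd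
  change ((Real.sqrt 2 : ℂ)⁻¹) • ((Real.sqrt 2 : ℂ) • (M (frameOf U h)).fst) +
    (((Real.sqrt 2 : ℂ)⁻¹ * Complex.I)) • ((Real.sqrt 2 : ℂ) • (M (frameOf U h)).snd) = _
  rw [sqrt_cancel, mul_comm, mul_smul, sqrt_cancel]

theorem K_inner (z w : Kspace H) : inner ℂ z w = inner ℂ z.fst w.fst + inner ℂ z.snd w.snd := rfl

theorem I_form (z : Kspace H) :
    inner ℂ (Iop H z) z = inner ℂ z.fst z.snd - inner ℂ z.snd z.fst := by
  rw [K_inner, Iop, blockOp_fst, blockOp_snd]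
  simp
  ring

/-- Norms of the two Cayley components in terms of the `I`-form. -/
theorem norm_plus (z : Kspace H) :
    ((‖z.fst + Complex.I • z.snd‖ ^ 2 : ℝ) : ℂ) = (‖z‖ ^ 2 : ℝ) + Complex.I * inner ℂ (Iop H z) z := by
  rw [I_form, WithLp.prod_norm_sq_eq_of_L2]
  push_cast
  have e (x : H) : ((‖x‖ : ℂ)) ^ 2 = inner ℂ x x := (inner_self_eq_norm_sq_to_K x).symm
  simp only [e, inner_add_left, inner_add_right, inner_smul_left, inner_smul_right, Complex.conj_I]
  linear_combination (-inner ℂ z.snd z.snd) * Complex.I_mul_I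

theorem norm_minus (z : Kspace H) :
    ((‖z.fst - Complex.I • z.snd‖ ^ 2 : ℝ) : ℂ) = (‖z‖ ^ 2 : ℝ) - Complex.I * inner ℂ (Iop H z) z := by
  rw [I_form, WithLp.prod_norm_sq_eq_of_L2]
  push_cast
  have e (x : H) : ((‖x‖ : ℂ)) ^ 2 = inner ℂ x x := (inner_self_eq_norm_sq_to_K x).symm
  simp only [e, inner_sub_left, inner_sub_right, inner_smul_left, inner_smul_right, Complex.conj_I]
  linear_combination (-inner ℂ z.snd z.snd) * Complex.I_mul_I

theorem form_zero (z : Kspace H)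
    (h : ‖z.fst + Complex.I • z.snd‖ = ‖z.fst - Complex.I • z.snd‖) :
    inner ℂ (Iop H z) z = 0 := by
  have h1 := norm_plus z
  have h2 := norm_minus z
  rw [h, h2] at h1
  have h3 : (2 * Complex.I) * inner ℂ (Iop H z) z = 0 := by linear_combination -h1
  simpa using h3

theorem norm_of_form_zero (z : Kspace H) (h : inner ℂ (Iop H z) z = 0) :
    ‖z.fst + Complex.I • z.snd‖ = ‖z‖ := by
  have h1 := norm_plus z
  rw [h, mul_zero, add_zero, Complex.ofReal_inj] at h1
  exact (sq_eq_sq₀ (norm_nonneg _) (norm_nonneg _)).1 h1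

theorem Iop_sq : Iop H * Iop H = -1 := by
  ext z
  · apply K_ext
    · change (Iop H (Iop H z)).fst = -z.fst
      simp [Iop, blockOp_fst, blockOp_snd]
    · change (Iop H (Iop H z)).snd = -z.snd
      simp [Iop, blockOp_fst, blockOp_snd]

theorem ring_aux {R : Type*} [Ring R] (m X J : R) (hm : IsUnit m) (hJ : J * J = -1)
    (h1 : X * (J * m) = J) : m * J * X = J := by
  have h2 : (-(J * X * J)) * m = 1 := by
    rw [neg_mul, mul_assoc, mul_assoc, h1, hJ, neg_neg]
  obtain ⟨u, rfl⟩ := hm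
  have h3 : (u : R) * (-(J * X * J)) = 1 := by
    rw [Units.mul_eq_one_iff_eq_inv.1 h2, Units.mul_inv]
  have h4 : (u : R) * J * X = ((u : R) * (-(J * X * J))) * J := by
    simp only [mul_neg, neg_mul, mul_assoc, hJ, mul_one, neg_neg]
  rw [h4, h3, one_mul]

theorem I_unitary_adjoint (M : Kspace H →L[ℂ] Kspace H)
    (hMinv : IsUnit M) (hMI : adjoint M ∘L Iop H ∘L M = Iop H) :
    M * Iop H * adjoint M = Iop H :=
  ring_aux M (adjoint M) (Iop H) hMinv Iop_sq hMI

theorem frame_plus (U : H →L[ℂ] H) (h : H) :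
    (frameOf U h).fst + Complex.I • (frameOf U h).snd = h := by
  rw [frameOf_fst, frameOf_snd, smul_smul, ← mul_assoc, Complex.I_mul_I]
  module

theorem frame_minus (U : H →L[ℂ] H) (h : H) :
    (frameOf U h).fst - Complex.I • (frameOf U h).snd = U h := by
  rw [frameOf_fst, frameOf_snd, smul_smul, ← mul_assoc, Complex.I_mul_I]
  module

theorem frame_form (U : H →L[ℂ] H) (hU : U ∈ unitary (H →L[ℂ] H)) (h : H) :
    inner ℂ (Iop H (frameOf U h)) (frameOf U h) = 0 := by
  apply form_zero
  rw [frame_plus, frame_minus, norm_map_of_mem_unitary hU]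

/-- The lower component `a' + i b'` preserves `‖M Ψ_U h‖`. -/
theorem norm_q (M : Kspace H →L[ℂ] Kspace H) (U : H →L[ℂ] H)
    (hMI : adjoint M ∘L Iop H ∘L M = Iop H) (hU : U ∈ unitary (H →L[ℂ] H)) (h : H) :
    ‖(cmp1 (M ∘L frameOf U) + Complex.I • cmp2 (M ∘L frameOf U)) h‖ = ‖M (frameOf U h)‖ := by
  apply norm_of_form_zero (M (frameOf U h))
  rw [← adjoint_inner_left]
  have := congrArg (fun T => T (frameOf U h)) hMI
  simp only [ContinuousLinearMap.comp_apply] at this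
  rw [this]
  exact frame_form U hU h

theorem adjoint_q_inj (M : Kspace H →L[ℂ] Kspace H) (U : H →L[ℂ] H)
    (hMinv : IsUnit M) (hMI : adjoint M ∘L Iop H ∘L M = Iop H)
    (hU : U ∈ unitary (H →L[ℂ] H)) (v : H)
    (hv : ∀ h, inner ℂ v ((cmp1 (M ∘L frameOf U) + Complex.I • cmp2 (M ∘L frameOf U)) h) = 0) :
    v = 0 := by
  set w : Kspace H := WithLp.toLp 2 (v, -(Complex.I • v)) with hw
  set z : Kspace H := adjoint M w with hz
  have e1 (h : H) : inner ℂ z (frameOf U h) = 0 := by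
    rw [hz, adjoint_inner_left, ← hv h, K_inner]
    change inner ℂ v (M (frameOf U h)).fst + inner ℂ (-(Complex.I • v)) (M (frameOf U h)).snd =
      inner ℂ v ((M (frameOf U h)).fst + Complex.I • (M (frameOf U h)).snd)
    simp only [inner_neg_left, inner_smul_left, inner_add_right, inner_smul_right, Complex.conj_I]
    ring
  have e2 (h : H) : inner ℂ (z.fst - Complex.I • z.snd) (U h) =
      - inner ℂ (z.fst + Complex.I • z.snd) h := by
    have := e1 h
    rw [K_inner, frameOf_fst, frameOf_snd] at this
    simp only [inner_sub_left, inner_add_left, inner_smul_left, inner_add_right, inner_sub_right,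
      inner_smul_right, Complex.conj_I] at this ⊢
    linear_combination 2 * this
  have e3 : adjoint U (z.fst - Complex.I • z.snd) = -(z.fst + Complex.I • z.snd) := by
    apply ext_inner_right ℂ
    intro h
    rw [adjoint_inner_left, e2, inner_neg_left]
  have e4 : ‖z.fst + Complex.I • z.snd‖ = ‖z.fst - Complex.I • z.snd‖ := by
    have h1 := norm_map_of_mem_unitary (Unitary.star_mem hU) (z.fst - Complex.I • z.snd)
    rw [ContinuousLinearMap.star_eq_adjoint, e3, norm_neg] at h1
    exact h1
  have e5 := form_zero z e4
  have e6 : inner ℂ (Iop H w) w = 0 := by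
    have h1 : Iop H w = M (Iop H z) := by
      conv_lhs => rw [← I_unitary_adjoint M hMinv hMI]
      rfl
    rw [h1, ← e5, hz, adjoint_inner_right]
  have e7 := norm_of_form_zero w e6
  have e8 := norm_minus w
  rw [e6, mul_zero, sub_zero, Complex.ofReal_inj, ← e7] at e8
  have e9 : w.fst - Complex.I • w.snd = 0 := by
    change v - Complex.I • (-(Complex.I • v)) = 0
    rw [smul_neg, smul_smul, Complex.I_mul_I]
    module
  rw [e9] at e8
  have e10 : w.fst + Complex.I • w.snd = (2 : ℂ) • v := by
    change v + Complex.I • (-(Complex.I • v)) = _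
    rw [smul_neg, smul_smul, Complex.I_mul_I]
    module
  rw [e10] at e8
  simpa using e8.symm

theorem isUnit_q (M : Kspace H →L[ℂ] Kspace H) (U : H →L[ℂ] H)
    (hMinv : IsUnit M) (hMI : adjoint M ∘L Iop H ∘L M = Iop H)
    (hU : U ∈ unitary (H →L[ℂ] H)) :
    IsUnit (cmp1 (M ∘L frameOf U) + Complex.I • cmp2 (M ∘L frameOf U)) := by
  have hn := norm_q M U hMI hU
  have hi := adjoint_q_inj M U hMinv hMI hU
  generalize cmp1 (M ∘L frameOf U) + Complex.I • cmp2 (M ∘L frameOf U) = q at hn hi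
  rw [ContinuousLinearMap.isUnit_iff_bijective,
    ContinuousLinearMap.bijective_iff_dense_range_and_antilipschitz]
  constructor
  · rw [Submodule.topologicalClosure_eq_top_iff, Submodule.eq_bot_iff]
    intro v hv
    apply hi
    intro h
    exact (Submodule.mem_orthogonal' _ _).1 hv _ ⟨h, rfl⟩
  · obtain ⟨u, rfl⟩ := hMinv
    refine ⟨‖((u⁻¹ : (Kspace H →L[ℂ] Kspace H)ˣ) : Kspace H →L[ℂ] Kspace H)‖₊, ?_⟩
    apply AddMonoidHomClass.antilipschitz_of_bound
    intro h
    rw [hn]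
    have h1 : ‖h‖ = ‖frameOf U h‖ := by
      rw [← norm_of_form_zero _ (frame_form U hU h), frame_plus]
    have h2 : frameOf U h = ((u⁻¹ : (Kspace H →L[ℂ] Kspace H)ˣ) : Kspace H →L[ℂ] Kspace H)
        ((u : Kspace H →L[ℂ] Kspace H) (frameOf U h)) := by
      rw [← mul_apply_eq_comp, Units.inv_mul, one_apply_eq_self]
    rw [h1]
    conv_lhs => rw [h2]
    exact ContinuousLinearMap.le_opNorm _ _

end Helpers

/-- Let `M` be `I`-unitary on `K`, `U` unitary on `H`, and `[[A,B],[C,D]]` the blocks of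
the `J`-unitary `C M C*`.  If `(a', b')` are the block components of `M Ψ_U`, then
`a' + i b'` is invertible and `(a' − i b')(a' + i b')⁻¹ = (AU + B)(CU + D)⁻¹`: the
stereographic projection intertwines the action of `M` on `I`-Lagrangian frames with the
Möbius action of `C M C*` on unitaries. -/
theorem stereographic_intertwines_moebius (M : Kspace H →L[ℂ] Kspace H) (U : H →L[ℂ] H)
    (hMinv : IsUnit M) (hMI : adjoint M ∘L Iop H ∘L M = Iop H)
    (hU : U ∈ unitary (H →L[ℂ] H)) :
    IsUnit (cmp1 (M ∘L frameOf U) + Complex.I • cmp2 (M ∘L frameOf U)) ∧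
    IsUnit (blkC (Cayley H ∘L M ∘L adjoint (Cayley H)) ∘L U +
      blkD (Cayley H ∘L M ∘L adjoint (Cayley H))) ∧
    (cmp1 (M ∘L frameOf U) - Complex.I • cmp2 (M ∘L frameOf U)) *
        Ring.inverse (cmp1 (M ∘L frameOf U) + Complex.I • cmp2 (M ∘L frameOf U)) =
      (blkA (Cayley H ∘L M ∘L adjoint (Cayley H)) ∘L U +
        blkB (Cayley H ∘L M ∘L adjoint (Cayley H))) *
        Ring.inverse (blkC (Cayley H ∘L M ∘L adjoint (Cayley H)) ∘L U +
          blkD (Cayley H ∘L M ∘L adjoint (Cayley H))) := by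
  have hq := isUnit_q M U hMinv hMI hU
  rw [blk_upper, blk_lower]
  exact ⟨hq, hq, rfl⟩
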